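/- For all nonnegative integers m and n with m ≤ 2n, D(m,n) = Σ_{0 ≤ k ≤ L} c(L − k) · M(n − L, n − L + k), where L := min(2n − m, m) and D(m,n) := π(m,n) − π(m−1,n) with π(−1,n) := 0. -/

import Mathlib

open Finset

/-- A pair of sequences of parts is *steadily decreasing* if
`min (a i) (b i) ≥ max (a (i+1)) (b (i+1))` for all `i`. -/
noncomputable def SteadilyDecreasing (a b : ℕ → ℕ) : Prop :=
  ∀ i, max (a (i + 1)) (b (i + 1)) ≤ min (a i) (b i)

/-- `bipartitePi m n` is the number of pairs of partitions (given as non-increasing,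
finitely supported sequences) of the bipartite number `(m, n)` with steadily
decreasing parts. -/
noncomputable def bipartitePi (m n : ℕ) : ℕ :=
  Nat.card {p : (ℕ →₀ ℕ) × (ℕ →₀ ℕ) //
    (∀ i, p.1 (i + 1) ≤ p.1 i) ∧ (∀ i, p.2 (i + 1) ≤ p.2 i) ∧
    SteadilyDecreasing p.1 p.2 ∧
    (p.1.sum fun _ x => x) = m ∧ (p.2.sum fun _ x => x) = n}

/-- The partition function `p n`. -/
noncomputable def partitionCount (n : ℕ) : ℕ := Nat.card (Nat.Partition n)

/-- The partition function extended to the integers, with `p r = 0` for `r < 0`. -/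
noncomputable def partitionCountInt (r : ℤ) : ℕ := if 0 ≤ r then partitionCount r.toNat else 0

/-- The cubic partition function `c n`, counting partitions of `n` in which even
parts come in two colors (equivalently, pairs of a partition together with a
partition into even parts, of total size `n`). -/
noncomputable def cubicPartition (n : ℕ) : ℕ :=
  Nat.card {p : Multiset ℕ × Multiset ℕ //
    (∀ i ∈ p.1, 0 < i) ∧ (∀ i ∈ p.2, 0 < i ∧ Even i) ∧ p.1.sum + p.2.sum = n}

/-- The Andrews–Garvan crank of a partition: the largest part if there are no ones,
and otherwise the number of parts larger than the number of ones minus the number of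
ones. -/
noncomputable def crank {n : ℕ} (l : n.Partition) : ℤ :=
  if l.parts.count 1 = 0 then (l.parts.sup : ℤ)
  else ((l.parts.filter fun p => l.parts.count 1 < p).card : ℤ) - l.parts.count 1

/-- `crankM m n` is the crank counting function `M(m, n)`: the number of partitions
of `n` with crank `m`, with the standard convention at `n = 1`
(`M(0,1) = -1`, `M(±1,1) = 1`, `M(m,1) = 0` otherwise). -/
noncomputable def crankM (m : ℤ) (n : ℕ) : ℤ :=
  if n = 1 then (if m = 0 then -1 else if m.natAbs = 1 then 1 else 0)
  else (Nat.card {l : n.Partition // crank l = m} : ℤ)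

/-- `alphaBip s k = Σ_{ℓ ≥ 0} (-1)^ℓ p(k - ℓ(ℓ+1)/2 - ℓ s)`. -/
noncomputable def alphaBip (s k : ℕ) : ℤ :=
  ∑' ℓ : ℕ, (-1 : ℤ) ^ ℓ *
    (partitionCountInt ((k : ℤ) - ℓ * (ℓ + 1) / 2 - ℓ * s) : ℤ)

/-- `Dbip m n = π(m,n) - π(m-1,n)`, with `π(-1,n) := 0`. -/
noncomputable def Dbip (m n : ℕ) : ℤ :=
  (bipartitePi m n : ℤ) - if m = 0 then 0 else (bipartitePi (m - 1) n : ℤ)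

/-!
Carlitz's bijection sends a steadily decreasing pair `(α, β)` of weight `(m, n)` to a triple
`(u, v, w)` of total size `n`, where `v` is a partition, `w` a partition into even parts, and `u`
a partition padded with zeros so that it has `m - n` more parts than `v`. Deleting a zero from `u`
lowers `m` by one, so `D(m, n)` counts the triples in which `u` has no zeros.

On the other hand, Cauchy's `q`-binomial theorem gives the Andrews–Garvan identity
`∑ M(s, n) z ^ s q ^ n = (q; q)_∞ / ((z q; q)_∞ (z⁻¹ q; q)_∞)`, and multiplying it by the generating
function of `c` leaves the generating function of these triples, with `z` marking the difference
between the numbers of parts of `u` and `v`. Hence `D(m, n) = ∑ c(n - j) M(m - n, j)`. Exchanging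
`u` and `v` replaces `m - n` by its absolute value, and the terms with `j < |m - n|` vanish.
-/

open PowerSeries
open scoped PowerSeries.WithPiTopology LaurentPolynomial

section GradedGenFun

variable {R α β : Type*} [CommRing R]

lemma eq_of_forall_X_pow_dvd_sub {f g : R⟦X⟧} (h : ∀ N, X ^ (N + 1) ∣ f - g) : f = g := by
  ext n
  rw [← sub_eq_zero, ← map_sub]
  exact X_pow_dvd_iff.mp (h n) n n.lt_succ_self

lemma X_pow_dvd_tsum [TopologicalSpace R] [T2Space R] {ι : Type*} {f : ι → R⟦X⟧} {N : ℕ}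
    (hf : Summable f) (hdvd : ∀ i, X ^ N ∣ f i) : X ^ N ∣ ∑' i, f i := by
  rw [X_pow_dvd_iff]
  intro n hn
  refine ((WithPiTopology.hasSum_iff_hasSum_coeff R).mp hf.hasSum n).unique ?_
  simp only [fun i => X_pow_dvd_iff.mp (hdvd i) n hn, hasSum_zero]

/-- The generating function `∑ₙ (∑_{a ∈ F n} w a) Xⁿ` of a family of finite sets `F`, where `F n`
holds the objects of size `n`, weighted by `w`. -/
noncomputable def gradedGenFun (F : ℕ → Finset α) (w : α → R) : R⟦X⟧ :=
  PowerSeries.mk fun n => ∑ a ∈ F n, w a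

/-- The pairs of an object of `F` and an object of `G` whose sizes add up to `n`. -/
def gradedProd [DecidableEq α] [DecidableEq β] (F : ℕ → Finset α) (G : ℕ → Finset β) (n : ℕ) :
    Finset (α × β) :=
  (antidiagonal n).biUnion fun p => F p.1 ×ˢ G p.2

@[simp]
lemma coeff_gradedGenFun (F : ℕ → Finset α) (w : α → R) (n : ℕ) :
    coeff n (gradedGenFun F w) = ∑ a ∈ F n, w a :=
  coeff_mk _ _

lemma gradedGenFun_congr {F : ℕ → Finset α} {w w' : α → R} (h : ∀ n, ∀ a ∈ F n, w a = w' a) :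
    gradedGenFun F w = gradedGenFun F w' := by
  ext n
  simpa using sum_congr rfl (h n)

lemma gradedGenFun_add (F : ℕ → Finset α) (w w' : α → R) :
    gradedGenFun F (fun a => w a + w' a) = gradedGenFun F w + gradedGenFun F w' := by
  ext n
  simp [sum_add_distrib]

lemma gradedGenFun_sub (F : ℕ → Finset α) (w w' : α → R) :
    gradedGenFun F (fun a => w a - w' a) = gradedGenFun F w - gradedGenFun F w' := by
  ext n
  simp [sum_sub_distrib]

lemma gradedGenFun_const_mul (F : ℕ → Finset α) (c : R) (w : α → R) :
    gradedGenFun F (fun a => c * w a) = C c * gradedGenFun F w := by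
  ext n
  simp [mul_sum]

lemma hasSum_gradedGenFun [TopologicalSpace R] [IsTopologicalRing R] {ι : Type*}
    (F : ℕ → Finset α) {w : ι → α → R} {w' : α → R} (h : ∀ a, HasSum (fun i => w i a) (w' a)) :
    HasSum (fun i => gradedGenFun F (w i)) (gradedGenFun F w') := by
  rw [WithPiTopology.hasSum_iff_hasSum_coeff]
  intro n
  simpa using hasSum_sum fun a _ => h a

lemma eq_of_mem_of_pairwise_disjoint {F : ℕ → Finset α}
    (hF : Pairwise (Function.onFun Disjoint F)) {i j : ℕ} {a : α} (hi : a ∈ F i) (hj : a ∈ F j) :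
    i = j :=
  by_contra fun hij => Finset.disjoint_left.mp (hF hij) hi hj

section Prod

variable [DecidableEq α] [DecidableEq β] {F : ℕ → Finset α} {G : ℕ → Finset β}

lemma mem_gradedProd {n : ℕ} {x : α × β} :
    x ∈ gradedProd F G n ↔ ∃ i j, i + j = n ∧ x.1 ∈ F i ∧ x.2 ∈ G j := by
  simp [gradedProd]

lemma pairwise_disjoint_gradedProd (hF : Pairwise (Function.onFun Disjoint F))
    (hG : Pairwise (Function.onFun Disjoint G)) :
    Pairwise (Function.onFun Disjoint (gradedProd F G)) := by
  intro m n hmn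
  rw [Function.onFun, Finset.disjoint_left]
  intro x hm hn
  obtain ⟨i, j, rfl, hxi, hxj⟩ := mem_gradedProd.mp hm
  obtain ⟨i', j', rfl, hxi', hxj'⟩ := mem_gradedProd.mp hn
  rw [eq_of_mem_of_pairwise_disjoint hF hxi hxi',
    eq_of_mem_of_pairwise_disjoint hG hxj hxj'] at hmn
  exact hmn rfl

lemma gradedGenFun_mul (hF : Pairwise (Function.onFun Disjoint F))
    (hG : Pairwise (Function.onFun Disjoint G)) (w : α → R) (w' : β → R) :
    gradedGenFun F w * gradedGenFun G w' =
      gradedGenFun (gradedProd F G) fun x => w x.1 * w' x.2 := by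
  ext n
  rw [coeff_mul, coeff_gradedGenFun, gradedProd, sum_biUnion]
  · simp only [coeff_gradedGenFun, sum_product, sum_mul_sum]
  · intro p _ p' _ hp
    rw [Function.onFun, Finset.disjoint_left]
    intro x hx hx'
    rw [mem_product] at hx hx'
    exact hp (Prod.ext (eq_of_mem_of_pairwise_disjoint hF hx.1 hx'.1)
      (eq_of_mem_of_pairwise_disjoint hG hx.2 hx'.2))

end Prod

end GradedGenFun

section PartitionGenFun

variable {R : Type*} [CommRing R]

/-- The partitions of `n`, as a finite set of multisets of positive integers. -/
def partitionMultisets (n : ℕ) : Finset (Multiset ℕ) :=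
  (univ : Finset n.Partition).map ⟨Nat.Partition.parts, fun _ _ => Nat.Partition.ext⟩

/-- The generating function of partitions, weighted by a function of their multiset of parts. -/
noncomputable abbrev partitionGenFun (F : Multiset ℕ → R) : R⟦X⟧ :=
  gradedGenFun partitionMultisets F

/-- The generating function `∏_{i ≥ 1} 1 / (1 - w i Xⁱ)` of partitions in which each part `i`
carries the weight `w i`. -/
noncomputable abbrev partWeightGenFun (w : ℕ → R) : R⟦X⟧ :=
  partitionGenFun fun s => (s.map w).prod

lemma mem_partitionMultisets {n : ℕ} {s : Multiset ℕ} :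
    s ∈ partitionMultisets n ↔ (∀ i ∈ s, 0 < i) ∧ s.sum = n := by
  simp only [partitionMultisets, mem_map, mem_univ, true_and]
  exact ⟨by rintro ⟨l, rfl⟩; exact ⟨fun _ => l.parts_pos, l.parts_sum⟩,
    fun ⟨hpos, hsum⟩ => ⟨⟨s, fun {i} => hpos i, hsum⟩, rfl⟩⟩

lemma sum_partitionMultisets (n : ℕ) (F : Multiset ℕ → R) :
    ∑ s ∈ partitionMultisets n, F s = ∑ l : n.Partition, F l.parts :=
  sum_map _ _ _

lemma pairwise_disjoint_partitionMultisets :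
    Pairwise (Function.onFun Disjoint partitionMultisets) := by
  intro m n hmn
  rw [Function.onFun, Finset.disjoint_left]
  intro s hm hn
  exact hmn ((mem_partitionMultisets.mp hm).2.symm.trans (mem_partitionMultisets.mp hn).2)

lemma X_pow_mul_partitionGenFun {j : ℕ} (hj : 0 < j) (F : Multiset ℕ → R) :
    X ^ j * partitionGenFun F =
      partitionGenFun fun s => if j ∈ s then F (s.erase j) else 0 := by
  ext n
  simp only [coeff_X_pow_mul', coeff_gradedGenFun]
  rw [← sum_filter]
  split_ifs with hjn
  · refine sum_bij' (fun s _ => j ::ₘ s) (fun s _ => s.erase j) ?_ ?_ ?_ ?_ ?_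
    · intro s hs
      obtain ⟨hpos, hsum⟩ := mem_partitionMultisets.mp hs
      refine mem_filter.mpr ⟨mem_partitionMultisets.mpr ⟨?_, ?_⟩, Multiset.mem_cons_self j s⟩
      · exact Multiset.forall_mem_cons.mpr ⟨hj, hpos⟩
      · rw [Multiset.sum_cons]
        omega
    · intro s hs
      obtain ⟨hs, hjs⟩ := mem_filter.mp hs
      obtain ⟨hpos, hsum⟩ := mem_partitionMultisets.mp hs
      refine mem_partitionMultisets.mpr ⟨fun i hi => hpos i (Multiset.mem_of_mem_erase hi), ?_⟩
      have := Multiset.sum_erase hjs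
      omega
    · simp
    · exact fun s hs => Multiset.cons_erase (mem_filter.mp hs).2
    · simp
  · refine (sum_eq_zero fun s hs => absurd ?_ hjn).symm
    obtain ⟨hs, hjs⟩ := mem_filter.mp hs
    exact (Multiset.le_sum_of_mem hjs).trans_eq (mem_partitionMultisets.mp hs).2

lemma partWeightGenFun_congr {w w' : ℕ → R} (h : ∀ i, 0 < i → w i = w' i) :
    partWeightGenFun w = partWeightGenFun w' :=
  gradedGenFun_congr fun _ _ hs => congrArg Multiset.prod <|
    Multiset.map_congr rfl fun i hi => h i ((mem_partitionMultisets.mp hs).1 i hi)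

lemma prod_map_update_zero (w : ℕ → R) (j : ℕ) (s : Multiset ℕ) :
    (s.map (Function.update w j 0)).prod = if j ∈ s then 0 else (s.map w).prod := by
  split_ifs with hj
  · exact Multiset.prod_eq_zero (Multiset.mem_map.mpr ⟨j, hj, Function.update_self ..⟩)
  · refine congrArg Multiset.prod (Multiset.map_congr rfl fun i hi => ?_)
    exact Function.update_of_ne (ne_of_mem_of_not_mem hi hj) ..

lemma partWeightGenFun_mul_one_sub (w : ℕ → R) {j : ℕ} (hj : 0 < j) :
    partWeightGenFun w * (1 - C (w j) * X ^ j) = partWeightGenFun (Function.update w j 0) := by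
  have split_off_part (s : Multiset ℕ) : (s.map w).prod =
      (s.map (Function.update w j 0)).prod +
        w j * if j ∈ s then ((s.erase j).map w).prod else 0 := by
    rw [prod_map_update_zero]
    split_ifs with hjs
    · rw [Multiset.prod_map_erase hjs, zero_add]
    · rw [mul_zero, add_zero]
  have recursion : partWeightGenFun w = partWeightGenFun (Function.update w j 0) +
      C (w j) * (X ^ j * partWeightGenFun w) := by
    rw [X_pow_mul_partitionGenFun hj, ← gradedGenFun_const_mul, ← gradedGenFun_add]
    exact gradedGenFun_congr fun _ s _ => split_off_part s
  linear_combination recursion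

lemma X_pow_dvd_partWeightGenFun_sub_one {w : ℕ → R} {N : ℕ}
    (hw : ∀ i, 0 < i → i ≤ N → w i = 0) : X ^ (N + 1) ∣ partWeightGenFun w - 1 := by
  rw [X_pow_dvd_iff]
  intro n hn
  rw [map_sub, coeff_one, coeff_gradedGenFun, sum_partitionMultisets, sub_eq_zero]
  split_ifs with hn0
  · subst hn0
    simp
  · refine sum_eq_zero fun l _ => ?_
    obtain ⟨i, hi⟩ : ∃ i, i ∈ l.parts := Multiset.exists_mem_of_ne_zero fun h => hn0 <| by
      rw [← l.parts_sum, h, Multiset.sum_zero]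
    have hin := Nat.Partition.le_of_mem_parts hi
    exact Multiset.prod_eq_zero (Multiset.mem_map.mpr ⟨i, hi, hw i (l.parts_pos hi) (by omega)⟩)

lemma partWeightGenFun_eq_one {w : ℕ → R} (hw : ∀ i, 0 < i → w i = 0) :
    partWeightGenFun w = 1 :=
  eq_of_forall_X_pow_dvd_sub fun _ => X_pow_dvd_partWeightGenFun_sub_one fun i hi _ => hw i hi

lemma partWeightGenFun_mul_prod (w : ℕ → R) (N : ℕ) :
    partWeightGenFun w * ∏ i ∈ range N, (1 - C (w (i + 1)) * X ^ (i + 1)) =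
      partWeightGenFun fun i => if i ≤ N then 0 else w i := by
  induction N with
  | zero =>
    rw [prod_range_zero, mul_one]
    exact partWeightGenFun_congr fun i hi => (if_neg (by omega)).symm
  | succ N ih =>
    have hstep := partWeightGenFun_mul_one_sub (fun i => if i ≤ N then 0 else w i) N.succ_pos
    simp only [N.succ_eq_add_one, N.not_succ_le_self, if_false] at hstep
    rw [prod_range_succ, ← mul_assoc, ih, hstep]
    refine partWeightGenFun_congr fun i _ => ?_
    rw [Function.update_apply]
    split_ifs <;> first | rfl | omega

lemma X_pow_dvd_partWeightGenFun_mul_prod_sub_one (w : ℕ → R) (N : ℕ) :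
    X ^ (N + 1) ∣
      partWeightGenFun w * ∏ i ∈ range N, (1 - C (w (i + 1)) * X ^ (i + 1)) - 1 := by
  rw [partWeightGenFun_mul_prod]
  exact X_pow_dvd_partWeightGenFun_sub_one fun i _ hi => if_pos hi

end PartitionGenFun

section CauchySum

variable {R : Type*} [CommRing R]

/-- The part weights of `1 / ((1 - X) ⋯ (1 - Xᵏ) (1 - z Xᵏ⁺¹) (1 - z Xᵏ⁺²) ⋯)`. -/
def thresholdWeight (z : R) (k i : ℕ) : R := if i ≤ k then 1 else z

lemma partWeightGenFun_thresholdWeight_zero (z : R) :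
    partWeightGenFun (thresholdWeight z 0) = partWeightGenFun fun _ => z :=
  partWeightGenFun_congr fun _ hi => if_neg (by omega)

lemma partWeightGenFun_thresholdWeight_succ (z : R) (k : ℕ) :
    (1 - X ^ (k + 1)) * partWeightGenFun (thresholdWeight z (k + 1)) =
      (1 - C z * X ^ (k + 1)) * partWeightGenFun (thresholdWeight z k) := by
  have hsucc := partWeightGenFun_mul_one_sub (thresholdWeight z (k + 1)) k.succ_pos
  have hk := partWeightGenFun_mul_one_sub (thresholdWeight z k) k.succ_pos
  have hupdate : Function.update (thresholdWeight z (k + 1)) (k + 1) 0 =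
      Function.update (thresholdWeight z k) (k + 1) 0 := by
    ext i
    simp only [Function.update_apply, thresholdWeight]
    split_ifs <;> first | rfl | omega
  simp only [thresholdWeight, Nat.succ_eq_add_one, le_refl, if_true, map_one, one_mul] at hsucc
  simp only [thresholdWeight, Nat.succ_eq_add_one, k.not_succ_le_self, if_false] at hk
  rw [mul_comm, mul_comm (1 - C z * _)]
  exact hsucc.trans ((congrArg partWeightGenFun hupdate).trans hk.symm)

/-- The `k`-th term of Cauchy's sum `∑ₖ (t Xʲ)ᵏ / ((1 - X) ⋯ (1 - Xᵏ) (1 - z Xᵏ⁺¹) ⋯)`. -/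
noncomputable def cauchyTerm (z t : R) (j k : ℕ) : R⟦X⟧ :=
  (C t * X ^ j) ^ k * partWeightGenFun (thresholdWeight z k)

lemma cauchyTerm_zero (z t : R) (j : ℕ) :
    cauchyTerm z t j 0 = partWeightGenFun fun _ => z := by
  rw [cauchyTerm, pow_zero, one_mul, partWeightGenFun_thresholdWeight_zero]

lemma X_pow_dvd_cauchyTerm (z t : R) (j k : ℕ) : X ^ (j * k) ∣ cauchyTerm z t j k := by
  rw [cauchyTerm, mul_pow, ← pow_mul, mul_assoc]
  exact (dvd_mul_right _ _).mul_left _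

lemma cauchyTerm_succ_sub (z t : R) (j k : ℕ) :
    cauchyTerm z t j (k + 1) - cauchyTerm z t (j + 1) (k + 1) =
      C t * X ^ j * (cauchyTerm z t j k - C z * X * cauchyTerm z t (j + 1) k) := by
  simp only [cauchyTerm]
  linear_combination
    (C t * X ^ j) ^ (k + 1) * partWeightGenFun_thresholdWeight_succ z k

lemma summable_cauchyTerm [TopologicalSpace R] (z t : R) {j : ℕ} (hj : 0 < j) :
    Summable (cauchyTerm z t j) := by
  rw [WithPiTopology.summable_iff_summable_coeff]
  intro n
  refine summable_of_ne_finset_zero (s := range (n + 1)) fun k hk => ?_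
  rw [mem_range, not_lt] at hk
  exact X_pow_dvd_iff.mp (X_pow_dvd_cauchyTerm z t j k) n (hk.trans (Nat.le_mul_of_pos_left k hj))

variable [TopologicalSpace R] [IsTopologicalRing R] [T2Space R]

lemma X_pow_dvd_tsum_cauchyTerm_sub (z t : R) {j : ℕ} (hj : 0 < j) :
    X ^ j ∣ ∑' k, cauchyTerm z t j k - partWeightGenFun fun _ => z := by
  have hs := summable_cauchyTerm z t hj
  rw [hs.tsum_eq_zero_add, cauchyTerm_zero, add_sub_cancel_left]
  refine X_pow_dvd_tsum ((summable_nat_add_iff 1).mpr hs) fun k => ?_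
  exact (pow_dvd_pow X (Nat.le_mul_of_pos_right j k.succ_pos)).trans
    (X_pow_dvd_cauchyTerm z t j (k + 1))

lemma one_sub_mul_tsum_cauchyTerm (z t : R) {j : ℕ} (hj : 0 < j) :
    (1 - C t * X ^ j) * ∑' k, cauchyTerm z t j k =
      (1 - C (z * t) * X ^ (j + 1)) * ∑' k, cauchyTerm z t (j + 1) k := by
  have hs := summable_cauchyTerm z t hj
  have hs' := summable_cauchyTerm z t j.succ_pos
  have hdiff : ∑' k, cauchyTerm z t j k - ∑' k, cauchyTerm z t (j + 1) k =
      C t * X ^ j * (∑' k, cauchyTerm z t j k - C z * X * ∑' k, cauchyTerm z t (j + 1) k) := by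
    rw [← hs'.tsum_mul_left, ← hs.tsum_sub (hs'.mul_left _),
      ← (hs.sub (hs'.mul_left _)).tsum_mul_left, ← hs.tsum_sub hs', (hs.sub hs').tsum_eq_zero_add,
      cauchyTerm_zero, cauchyTerm_zero, sub_self, zero_add]
    exact tsum_congr (cauchyTerm_succ_sub z t j)
  rw [map_mul]
  linear_combination hdiff

lemma prod_mul_tsum_cauchyTerm (z t : R) (N : ℕ) :
    (∏ i ∈ range N, (1 - C t * X ^ (i + 1))) * ∑' k, cauchyTerm z t 1 k =
      (∏ i ∈ range N, (1 - C (z * t) * X ^ (i + 2))) * ∑' k, cauchyTerm z t (N + 1) k := by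
  induction N with
  | zero => simp only [prod_range_zero]
  | succ N ih =>
    rw [prod_range_succ, prod_range_succ]
    linear_combination (1 - C t * X ^ (N + 1)) * ih +
      (∏ i ∈ range N, (1 - C (z * t) * X ^ (i + 2))) * one_sub_mul_tsum_cauchyTerm z t N.add_one_pos

/-- Cauchy's `q`-binomial theorem. -/
theorem tsum_cauchyTerm_mul (z t : R) :
    (∑' k, cauchyTerm z t 1 k) * ((1 - C (z * t) * X) * partWeightGenFun fun _ => z * t) =
      (partWeightGenFun fun _ => z) * partWeightGenFun fun _ => t := by
  refine eq_of_forall_X_pow_dvd_sub fun N => ?_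
  obtain ⟨a, ha⟩ := X_pow_dvd_partWeightGenFun_mul_prod_sub_one (fun _ => t) N
  obtain ⟨b, hb⟩ := X_pow_dvd_partWeightGenFun_mul_prod_sub_one (fun _ => z * t) (N + 1)
  obtain ⟨c, hc⟩ := X_pow_dvd_tsum_cauchyTerm_sub z t N.add_one_pos
  rw [prod_range_succ', zero_add, pow_one] at hb
  set S := ∑' k, cauchyTerm z t 1 k
  set S' := ∑' k, cauchyTerm z t (N + 1) k
  set Gt := partWeightGenFun fun _ => t
  set Gzt := (1 - C (z * t) * X) * partWeightGenFun fun _ => z * t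
  refine ⟨-S * Gzt * a + Gt * S' * X * b + Gt * c, ?_⟩
  linear_combination -S * Gzt * ha + Gt * S' * hb + Gt * hc +
    Gzt * Gt * prod_mul_tsum_cauchyTerm z t N

end CauchySum

section Crank

variable {R : Type*} [CommRing R]

lemma prod_map_thresholdWeight (z : R) (k : ℕ) (s : Multiset ℕ) :
    (s.map (thresholdWeight z k)).prod = z ^ (s.filter (k < ·)).card := by
  induction s using Multiset.induction_on with
  | empty => simp
  | cons a s ih =>
    rw [Multiset.map_cons, Multiset.prod_cons, ih, thresholdWeight]
    split_ifs with hak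
    · rw [Multiset.filter_cons_of_neg _ hak.not_gt, one_mul]
    · rw [Multiset.filter_cons_of_pos _ (not_le.mp hak), Multiset.card_cons, pow_succ']

lemma prod_map_thresholdWeight_zero (k : ℕ) (s : Multiset ℕ) :
    (s.map (thresholdWeight (0 : R) k)).prod = if s.sup ≤ k then 1 else 0 := by
  rw [prod_map_thresholdWeight, zero_pow_eq]
  refine if_congr ?_ rfl rfl
  simp only [Multiset.card_eq_zero, Multiset.filter_eq_nil, not_lt, Multiset.sup_le]

lemma X_pow_mul_partWeightGenFun_thresholdWeight_zero (m : ℕ) :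
    X ^ m * partWeightGenFun (thresholdWeight (0 : R) m) =
      partitionGenFun fun s => if s.sup = m then 1 else 0 := by
  cases m with
  | zero =>
    rw [pow_zero, one_mul]
    refine gradedGenFun_congr fun _ s _ => ?_
    rw [prod_map_thresholdWeight_zero]
    exact if_congr Nat.le_zero rfl rfl
  | succ m =>
    have hrec := partWeightGenFun_thresholdWeight_succ (0 : R) m
    rw [map_zero, zero_mul, sub_zero, one_mul] at hrec
    calc X ^ (m + 1) * partWeightGenFun (thresholdWeight (0 : R) (m + 1))
      _ = partWeightGenFun (thresholdWeight 0 (m + 1)) -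
            partWeightGenFun (thresholdWeight 0 m) := by linear_combination -hrec
      _ = partitionGenFun fun s => if s.sup = m + 1 then 1 else 0 := by
        rw [← gradedGenFun_sub]
        refine gradedGenFun_congr fun _ s _ => ?_
        rw [prod_map_thresholdWeight_zero, prod_map_thresholdWeight_zero]
        split_ifs <;> first | omega | simp

lemma partitionGenFun_pow_sup (z : R) :
    (partitionGenFun fun s => z ^ s.sup) = partWeightGenFun fun _ => z := by
  let _ : TopologicalSpace R := ⊥
  have : DiscreteTopology R := ⟨rfl⟩
  have hterm (m : ℕ) : cauchyTerm 0 z 1 m =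
      partitionGenFun fun s => z ^ m * if s.sup = m then 1 else 0 := by
    rw [cauchyTerm, pow_one, mul_pow, mul_assoc, X_pow_mul_partWeightGenFun_thresholdWeight_zero,
      ← map_pow, ← gradedGenFun_const_mul]
  have hsum : HasSum (cauchyTerm 0 z 1) (partitionGenFun fun s => z ^ s.sup) := by
    simp only [funext hterm]
    refine hasSum_gradedGenFun _ fun s => ?_
    convert hasSum_single s.sup fun m hm => ?_ using 1
    · simp
    · simp [hm.symm]
  have hcauchy := tsum_cauchyTerm_mul 0 z
  have hone : (partWeightGenFun fun _ => (0 : R)) = 1 := partWeightGenFun_eq_one fun _ _ => rfl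
  rwa [hsum.tsum_eq, zero_mul, hone, map_zero, zero_mul, sub_zero, one_mul, mul_one,
    one_mul] at hcauchy

lemma partitionGenFun_singleton_one (c : R) :
    (partitionGenFun fun s => if s = {1} then c else 0) = C c * X := by
  ext n
  rw [coeff_gradedGenFun, sum_ite_eq', coeff_C_mul, coeff_X, mul_ite, mul_one, mul_zero]
  refine if_congr ?_ rfl rfl
  rw [mem_partitionMultisets]
  simp [eq_comm]

lemma sup_erase_one {s : Multiset ℕ} (hpos : ∀ i ∈ s, 0 < i) (hmem : 1 ∈ s) (hne : s ≠ {1}) :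
    (s.erase 1).sup = s.sup := by
  obtain ⟨t, rfl⟩ := Multiset.exists_cons_of_mem hmem
  obtain ⟨i, hi⟩ : ∃ i, i ∈ t := Multiset.exists_mem_of_ne_zero fun ht => hne (by rw [ht]; rfl)
  rw [Multiset.erase_cons_head, Multiset.sup_cons, eq_comm, sup_eq_right]
  exact (hpos i (Multiset.mem_cons_of_mem hi)).trans_le (Multiset.le_sup hi)

lemma partitionGenFun_pow_sup_of_count_one_eq_zero (z : R) :
    (partitionGenFun fun s => if s.count 1 = 0 then z ^ s.sup else 0) + C (z - 1) * X =
      (1 - X) * partWeightGenFun fun _ => z := by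
  have split_off_one (n : ℕ) (s : Multiset ℕ) (hs : s ∈ partitionMultisets n) :
      z ^ s.sup = (if s.count 1 = 0 then z ^ s.sup else 0) +
        ((if 1 ∈ s then z ^ (s.erase 1).sup else 0) + if s = {1} then z - 1 else 0) := by
    by_cases hmem : 1 ∈ s
    · rw [if_neg (Multiset.count_ne_zero.mpr hmem), if_pos hmem, zero_add]
      split_ifs with hsingle
      · simp [hsingle]
      · rw [sup_erase_one (mem_partitionMultisets.mp hs).1 hmem hsingle, add_zero]
    · have hne : s ≠ {1} := fun h => hmem (h ▸ Multiset.mem_singleton_self 1)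
      rw [if_pos (Multiset.count_eq_zero.mpr hmem), if_neg hmem, if_neg hne, add_zero, add_zero]
  have hsplit := gradedGenFun_congr split_off_one
  rw [gradedGenFun_add, gradedGenFun_add] at hsplit
  linear_combination -hsplit + (1 - X) * partitionGenFun_pow_sup z +
    X_pow_mul_partitionGenFun one_pos (fun s => z ^ s.sup) - partitionGenFun_singleton_one (z - 1)

lemma partitionGenFun_prod_of_count_one_eq {w : ℕ → R} (hw : w 1 = 1) (k : ℕ) :
    (partitionGenFun fun s => if s.count 1 = k then (s.map w).prod else 0) =
      (1 - X) * (X ^ k * partWeightGenFun w) := by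
  induction k with
  | zero =>
    have hupdate := partWeightGenFun_mul_one_sub w one_pos
    rw [hw, map_one, one_mul, pow_one] at hupdate
    rw [pow_zero, one_mul, mul_comm, hupdate]
    refine gradedGenFun_congr fun _ s _ => ?_
    simp only [prod_map_update_zero, Multiset.count_eq_zero, ite_not]
  | succ k ih =>
    rw [pow_succ', mul_assoc, mul_left_comm, ← ih, ← pow_one X, X_pow_mul_partitionGenFun one_pos]
    refine gradedGenFun_congr fun _ s _ => ?_
    by_cases hmem : 1 ∈ s
    · obtain ⟨t, rfl⟩ := Multiset.exists_cons_of_mem hmem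
      simp [hw]
    · simp [hmem]

/-- The crank of a partition as a function of its multiset of parts. -/
noncomputable def crankOfParts (s : Multiset ℕ) : ℤ :=
  if s.count 1 = 0 then (s.sup : ℤ) else ((s.filter (s.count 1 < ·)).card : ℤ) - s.count 1

/-- The crank generating function `∑ₙ ∑ₘ M(m, n) zᵐ Xⁿ`; the last summand implements the
convention that `z⁻¹ + z - 1` replaces `z⁻¹` as the coefficient of `X`. -/
noncomputable def crankGenFun (z : Rˣ) : R⟦X⟧ :=
  (partitionGenFun fun s => ((z ^ crankOfParts s : Rˣ) : R)) + C ((z : R) - 1) * X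

lemma partitionGenFun_crankOfParts_of_count_one_eq (z : Rˣ) {k : ℕ} (hk : k ≠ 0) :
    (partitionGenFun fun s => if s.count 1 = k then ((z ^ crankOfParts s : Rˣ) : R) else 0) =
      (1 - X) * cauchyTerm (z : R) ↑z⁻¹ 1 k := by
  have hw : thresholdWeight (z : R) k 1 = 1 := if_pos (Nat.one_le_iff_ne_zero.mpr hk)
  rw [cauchyTerm, pow_one, mul_pow, mul_assoc, ← map_pow, mul_left_comm,
    ← partitionGenFun_prod_of_count_one_eq hw, ← gradedGenFun_const_mul]
  refine gradedGenFun_congr fun _ s _ => ?_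
  rw [mul_ite, mul_zero]
  split_ifs with hcount
  · rw [prod_map_thresholdWeight, crankOfParts, if_neg (hcount.trans_ne hk), hcount, sub_eq_neg_add,
      zpow_add, zpow_neg, zpow_natCast, zpow_natCast, ← inv_pow]
    push_cast
    rfl
  · rfl

lemma crankGenFun_eq_tsum [TopologicalSpace R] [IsTopologicalRing R] [T2Space R] (z : Rˣ) :
    crankGenFun z = (1 - X) * ∑' k, cauchyTerm (z : R) ↑z⁻¹ 1 k := by
  set f : ℕ → R⟦X⟧ := fun k => partitionGenFun fun s =>
    if s.count 1 = k then ((z ^ crankOfParts s : Rˣ) : R) else 0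
  have hf : HasSum f (partitionGenFun fun s => ((z ^ crankOfParts s : Rˣ) : R)) := by
    refine hasSum_gradedGenFun _ fun s => ?_
    convert hasSum_single (s.count 1) fun k hk => ?_ using 1
    · simp
    · simp [hk.symm]
  have hf_zero : f 0 + C ((z : R) - 1) * X = (1 - X) * cauchyTerm (z : R) ↑z⁻¹ 1 0 := by
    rw [cauchyTerm_zero, ← partitionGenFun_pow_sup_of_count_one_eq_zero]
    congr 1
    refine gradedGenFun_congr fun _ s _ => if_ctx_congr Iff.rfl (fun hs => ?_) fun _ => rfl
    rw [crankOfParts, if_pos hs, zpow_natCast, Units.val_pow_eq_pow_val]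
  have hf_succ (k : ℕ) : f (k + 1) = (1 - X) * cauchyTerm (z : R) ↑z⁻¹ 1 (k + 1) :=
    partitionGenFun_crankOfParts_of_count_one_eq z k.succ_ne_zero
  have hs := summable_cauchyTerm (z : R) ↑z⁻¹ one_pos
  rw [crankGenFun, ← hf.tsum_eq, hf.summable.tsum_eq_zero_add, hs.tsum_eq_zero_add, mul_add,
    ← hf_zero, ← ((summable_nat_add_iff 1).mpr hs).tsum_mul_left, tsum_congr hf_succ]
  ring

/-- The Andrews–Garvan identity. -/
theorem crankGenFun_mul (z : Rˣ) :
    (crankGenFun z * partWeightGenFun fun _ => (1 : R)) =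
      (partWeightGenFun fun _ => (z : R)) * partWeightGenFun fun _ => (↑z⁻¹ : R) := by
  let _ : TopologicalSpace R := ⊥
  have : DiscreteTopology R := ⟨rfl⟩
  rw [crankGenFun_eq_tsum, ← tsum_cauchyTerm_mul, Units.mul_inv, map_one, one_mul]
  ring

end Crank

section CrankTriples

open LaurentPolynomial (T)

/-- The partitions of `n` into even parts, as a finite set of multisets. -/
def evenPartitionMultisets (n : ℕ) : Finset (Multiset ℕ) :=
  {s ∈ partitionMultisets n | ∀ i ∈ s, Even i}

/-- The triples `((u, v), w)` of partitions of total size `n` in which `w` has even parts only. -/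
def partitionTriples (n : ℕ) : Finset ((Multiset ℕ × Multiset ℕ) × Multiset ℕ) :=
  gradedProd (gradedProd partitionMultisets partitionMultisets) evenPartitionMultisets n

/-- The triples `((u, v), w)` in `partitionTriples n` in which `u` has `s` more parts than `v`. -/
def crankTriples (s : ℤ) (n : ℕ) : Finset ((Multiset ℕ × Multiset ℕ) × Multiset ℕ) :=
  {x ∈ partitionTriples n | (x.1.1.card : ℤ) - x.1.2.card = s}

lemma mem_evenPartitionMultisets {n : ℕ} {s : Multiset ℕ} :
    s ∈ evenPartitionMultisets n ↔ (∀ i ∈ s, 0 < i ∧ Even i) ∧ s.sum = n := by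
  rw [evenPartitionMultisets, mem_filter, mem_partitionMultisets, forall₂_and, and_right_comm]

lemma mem_crankTriples {s : ℤ} {n : ℕ} {x : (Multiset ℕ × Multiset ℕ) × Multiset ℕ} :
    x ∈ crankTriples s n ↔ (∀ i ∈ x.1.1, 0 < i) ∧ (∀ i ∈ x.1.2, 0 < i) ∧
      (∀ i ∈ x.2, 0 < i ∧ Even i) ∧ x.1.1.sum + x.1.2.sum + x.2.sum = n ∧
      (x.1.1.card : ℤ) - x.1.2.card = s := by
  simp only [crankTriples, partitionTriples, mem_filter, mem_gradedProd, mem_partitionMultisets,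
    mem_evenPartitionMultisets]
  constructor
  · rintro ⟨⟨_, _, hn, ⟨_, _, rfl, ⟨hu, rfl⟩, hv, rfl⟩, hw, rfl⟩, hs⟩
    exact ⟨hu, hv, hw, hn, hs⟩
  · rintro ⟨hu, hv, hw, hn, hs⟩
    exact ⟨⟨_, _, hn, ⟨_, _, rfl, ⟨hu, rfl⟩, hv, rfl⟩, hw, rfl⟩, hs⟩

lemma card_crankTriples_neg (s : ℤ) (n : ℕ) : #(crankTriples (-s) n) = #(crankTriples s n) := by
  have maps_swap (s : ℤ) : Set.MapsTo (Prod.map Prod.swap id)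
      (crankTriples s n : Set ((Multiset ℕ × Multiset ℕ) × Multiset ℕ)) (crankTriples (-s) n) := by
    intro x hx
    obtain ⟨hu, hv, hw, hn, hs⟩ := mem_crankTriples.mp hx
    exact mem_crankTriples.mpr ⟨hv, hu, hw, add_comm x.1.1.sum _ ▸ hn, by dsimp; omega⟩
  exact card_nbij' (Prod.map Prod.swap id) (Prod.map Prod.swap id)
    (by simpa only [neg_neg] using maps_swap (-s)) (maps_swap s) (fun _ _ => rfl) fun _ _ => rfl

lemma card_crankTriples_abs (s : ℤ) (n : ℕ) : #(crankTriples |s| n) = #(crankTriples s n) := by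
  rcases abs_choice s with hs | hs
  · rw [hs]
  · rw [hs, card_crankTriples_neg]

lemma pairwise_disjoint_evenPartitionMultisets :
    Pairwise (Function.onFun Disjoint evenPartitionMultisets) :=
  pairwise_disjoint_partitionMultisets.mono fun _ _ h => disjoint_filter_filter h

lemma partWeightGenFun_const {R : Type*} [CommRing R] (z : R) :
    (partWeightGenFun fun _ => z) = partitionGenFun fun s => z ^ s.card := by
  simp only [partWeightGenFun, Multiset.map_const', Multiset.prod_replicate]

lemma mk_cubicPartition (R : Type*) [CommRing R] :
    (PowerSeries.mk fun n => (cubicPartition n : R)) =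
      (partWeightGenFun fun _ => (1 : R)) * gradedGenFun evenPartitionMultisets fun _ => 1 := by
  rw [partWeightGenFun_const, gradedGenFun_mul pairwise_disjoint_partitionMultisets
    pairwise_disjoint_evenPartitionMultisets]
  ext n
  simp only [coeff_mk, coeff_gradedGenFun, one_pow, mul_one, sum_const, nsmul_one]
  congr 1
  refine Nat.subtype_card _ fun x => ?_
  simp only [mem_gradedProd, mem_partitionMultisets, mem_evenPartitionMultisets]
  constructor
  · rintro ⟨_, _, rfl, ⟨hu, rfl⟩, hw, rfl⟩
    exact ⟨hu, hw, rfl⟩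
  · rintro ⟨hu, hw, hn⟩
    exact ⟨_, _, hn, ⟨hu, rfl⟩, hw, rfl⟩

lemma crankGenFun_mul_mk_cubicPartition {R : Type*} [CommRing R] (z : Rˣ) :
    crankGenFun z * PowerSeries.mk (fun n => (cubicPartition n : R)) =
      gradedGenFun partitionTriples fun x =>
        ((z ^ ((x.1.1.card : ℤ) - x.1.2.card) : Rˣ) : R) := by
  rw [mk_cubicPartition, ← mul_assoc, crankGenFun_mul, partWeightGenFun_const,
    partWeightGenFun_const, gradedGenFun_mul pairwise_disjoint_partitionMultisets
      pairwise_disjoint_partitionMultisets, gradedGenFun_mul (pairwise_disjoint_gradedProd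
      pairwise_disjoint_partitionMultisets pairwise_disjoint_partitionMultisets)
      pairwise_disjoint_evenPartitionMultisets]
  refine gradedGenFun_congr fun _ x _ => ?_
  rw [mul_one, zpow_sub, zpow_natCast, zpow_natCast, ← inv_pow]
  push_cast
  rfl

/-- The indeterminate `T` of `ℤ[T;T⁻¹]`, as a unit. -/
noncomputable def laurentUnit : ℤ[T;T⁻¹]ˣ where
  val := T 1
  inv := T (-1)
  val_inv := by rw [← LaurentPolynomial.T_add, add_neg_cancel, LaurentPolynomial.T_zero]
  inv_val := by rw [← LaurentPolynomial.T_add, neg_add_cancel, LaurentPolynomial.T_zero]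

lemma val_laurentUnit_zpow (e : ℤ) : ((laurentUnit ^ e : ℤ[T;T⁻¹]ˣ) : ℤ[T;T⁻¹]) = T e := by
  have hpow (k : ℕ) : T 1 ^ k = (T k : ℤ[T;T⁻¹]) := by
    rw [LaurentPolynomial.T_pow, mul_one]
  have hinv_pow (k : ℕ) : T (-1) ^ k = (T (-k) : ℤ[T;T⁻¹]) := by
    rw [LaurentPolynomial.T_pow, mul_neg_one]
  obtain ⟨k, rfl | rfl⟩ := e.eq_nat_or_neg
  · rw [zpow_natCast, Units.val_pow_eq_pow_val]
    exact hpow k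
  · rw [zpow_neg, zpow_natCast, ← inv_pow, Units.val_pow_eq_pow_val]
    exact hinv_pow k

lemma coeff_sum_T {α : Type*} (A : Finset α) (f : α → ℤ) (s : ℤ) :
    (∑ a ∈ A, (T (f a) : ℤ[T;T⁻¹])).coeff s = #{a ∈ A | f a = s} := by
  simp only [AddMonoidAlgebra.coeff_sum, Finsupp.finsetSum_apply, LaurentPolynomial.T_apply,
    sum_boole]

lemma coeff_one_crankGenFun {R : Type*} [CommRing R] (z : Rˣ) :
    coeff 1 (crankGenFun z) = ↑z⁻¹ + (z - 1) := by
  rw [crankGenFun, map_add, coeff_gradedGenFun, sum_partitionMultisets, coeff_C_mul, coeff_one_X,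
    mul_one, Fintype.sum_unique]
  simp [crankOfParts, Multiset.filter_singleton]

lemma coeff_crankGenFun_of_ne_one {R : Type*} [CommRing R] (z : Rˣ) {n : ℕ} (hn : n ≠ 1) :
    coeff n (crankGenFun z) = ∑ l : n.Partition, ((z ^ crank l : Rˣ) : R) := by
  rw [crankGenFun, map_add, coeff_gradedGenFun, sum_partitionMultisets, coeff_C_mul, coeff_X,
    if_neg hn, mul_zero, add_zero]
  rfl

lemma coeff_crankGenFun_laurentUnit (n : ℕ) (s : ℤ) :
    (coeff n (crankGenFun laurentUnit)).coeff s = crankM s n := by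
  by_cases hn : n = 1
  · have hcoeff : coeff 1 (crankGenFun laurentUnit) = T (-1) + (T 1 - T 0) :=
      coeff_one_crankGenFun laurentUnit
    rw [crankM, if_pos hn, hn, hcoeff]
    simp only [AddMonoidAlgebra.coeff_add, AddMonoidAlgebra.coeff_sub, Finsupp.add_apply,
      Finsupp.sub_apply, LaurentPolynomial.T_apply]
    split_ifs <;> omega
  · rw [crankM, if_neg hn, coeff_crankGenFun_of_ne_one _ hn]
    simp only [val_laurentUnit_zpow]
    rw [coeff_sum_T, Nat.card_eq_fintype_card, Fintype.card_subtype]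

theorem card_crankTriples (s : ℤ) (n : ℕ) :
    (#(crankTriples s n) : ℤ) =
      ∑ p ∈ antidiagonal n, (cubicPartition p.2 : ℤ) * crankM s p.1 := by
  have hcoeff := congrArg (fun f => (coeff n f).coeff s)
    (crankGenFun_mul_mk_cubicPartition laurentUnit)
  simp only [coeff_gradedGenFun, val_laurentUnit_zpow] at hcoeff
  rw [coeff_sum_T] at hcoeff
  simp only [crankTriples, ← hcoeff, coeff_mul, coeff_mk, AddMonoidAlgebra.coeff_sum,
    Finsupp.finsetSum_apply, ← nsmul_eq_mul', AddMonoidAlgebra.coeff_smul, Finsupp.smul_apply,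
    coeff_crankGenFun_laurentUnit]
  simp only [nsmul_eq_mul]

end CrankTriples

section CarlitzBijection

open Finsupp (degree weight)

/-- The sequence `f 1, f 2, …` obtained from `f` by dropping its first term. -/
noncomputable def shift : (ℕ →₀ ℕ) →+ (ℕ →₀ ℕ) :=
  Finsupp.comapDomain.addMonoidHom (add_left_injective 1)

/-- The subsequence `f 0, f 2, f 4, …` of `f`. -/
noncomputable def evenPart : (ℕ →₀ ℕ) →+ (ℕ →₀ ℕ) :=
  Finsupp.comapDomain.addMonoidHom (f := (2 * ·)) (mul_right_injective₀ two_ne_zero)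

/-- The subsequence `f 1, f 3, f 5, …` of `f`. -/
noncomputable def oddPart : (ℕ →₀ ℕ) →+ (ℕ →₀ ℕ) :=
  Finsupp.comapDomain.addMonoidHom (f := (2 * · + 1))
    ((add_left_injective 1).comp (mul_right_injective₀ two_ne_zero))

lemma shift_apply (f : ℕ →₀ ℕ) (i : ℕ) : shift f i = f (i + 1) := rfl

lemma evenPart_apply (f : ℕ →₀ ℕ) (i : ℕ) : evenPart f i = f (2 * i) := rfl

lemma oddPart_apply (f : ℕ →₀ ℕ) (i : ℕ) : oddPart f i = f (2 * i + 1) := rfl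

lemma weight_succ (f : ℕ →₀ ℕ) : weight Nat.succ f = weight id f + degree f := by
  simp only [Finsupp.weight_apply, Finsupp.degree_apply, Finsupp.sum, smul_eq_mul, id,
    Nat.succ_eq_add_one, mul_add_one, sum_add_distrib]

lemma weight_succ_shift (f : ℕ →₀ ℕ) : weight Nat.succ (shift f) = weight id f := by
  induction f using Finsupp.induction_linear with
  | zero => simp only [map_zero]
  | add f g hf hg => simp only [map_add, hf, hg]
  | single i x =>
    cases i with
    | zero =>
      have hshift : shift (Finsupp.single 0 x) = 0 := by
        ext i
        simp [shift_apply]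
      rw [hshift, map_zero, Finsupp.weight_single, id, smul_zero]
    | succ i =>
      have hshift : shift (Finsupp.single (i + 1) x) = Finsupp.single i x := by
        ext j
        simp [shift_apply, Finsupp.single_apply]
      rw [hshift, Finsupp.weight_single, Finsupp.weight_single, id]

/-- The sequence `f 0, g 0, f 1, g 1, …`. -/
noncomputable def interleave (f g : ℕ →₀ ℕ) : ℕ →₀ ℕ :=
  f.mapDomain (2 * ·) + g.mapDomain (2 * · + 1)

lemma evenPart_interleave (f g : ℕ →₀ ℕ) : evenPart (interleave f g) = f := by
  ext i
  rw [evenPart_apply, interleave, Finsupp.add_apply,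
    Finsupp.mapDomain_apply (f := (2 * ·)) (mul_right_injective₀ two_ne_zero),
    Finsupp.mapDomain_of_notMem_range, add_zero]
  rintro ⟨j, hj⟩
  dsimp only at hj
  omega

lemma oddPart_interleave (f g : ℕ →₀ ℕ) : oddPart (interleave f g) = g := by
  ext i
  rw [oddPart_apply, interleave, Finsupp.add_apply,
    Finsupp.mapDomain_apply (f := (2 * · + 1))
      ((add_left_injective 1).comp (mul_right_injective₀ two_ne_zero)),
    Finsupp.mapDomain_of_notMem_range, zero_add]
  rintro ⟨j, hj⟩
  dsimp only at hj
  omega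

lemma eq_of_evenPart_eq_of_oddPart_eq {f g : ℕ →₀ ℕ} (heven : evenPart f = evenPart g)
    (hodd : oddPart f = oddPart g) : f = g := by
  ext i
  obtain ⟨j, rfl | rfl⟩ := i.even_or_odd'
  · exact DFunLike.congr_fun heven j
  · exact DFunLike.congr_fun hodd j

lemma interleave_evenPart_oddPart (f : ℕ →₀ ℕ) : interleave (evenPart f) (oddPart f) = f :=
  eq_of_evenPart_eq_of_oddPart_eq (evenPart_interleave _ _) (oddPart_interleave _ _)

lemma weight_mapDomain {σ τ : Type*} (c : τ → ℕ) (h : σ → τ) (f : σ →₀ ℕ) :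
    weight c (f.mapDomain h) = weight (c ∘ h) f := by
  simp only [Finsupp.weight_apply]
  exact Finsupp.sum_mapDomain_index (fun _ => zero_smul _ _) fun _ _ _ => add_smul _ _ _

lemma weight_eq_evenPart_add_oddPart (c : ℕ → ℕ) (f : ℕ →₀ ℕ) :
    weight c f = weight (c ∘ (2 * ·)) (evenPart f) + weight (c ∘ (2 * · + 1)) (oddPart f) := by
  rw [← weight_mapDomain, ← weight_mapDomain, ← map_add, ← interleave,
    interleave_evenPart_oddPart]

lemma eq_of_eq_add_shift {c f g : ℕ →₀ ℕ} (hf : f = c + shift f) (hg : g = c + shift g) :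
    f = g := by
  have agree_succ (i : ℕ) (hi : f (i + 1) = g (i + 1)) : f i = g i := by
    rw [hf, hg, Finsupp.add_apply, Finsupp.add_apply, shift_apply, shift_apply, hi]
  obtain ⟨b, hb⟩ := (f.support ∪ g.support).bddAbove
  have agree_large (i : ℕ) (hi : b < i) : f i = g i := by
    have hmem : i ∉ f.support ∪ g.support := fun h => (hb h).not_gt hi
    rw [notMem_union, Finsupp.notMem_support_iff, Finsupp.notMem_support_iff] at hmem
    rw [hmem.1, hmem.2]
  ext i
  exact Nat.decreasingInduction (motive := fun i _ => f i = g i) (fun i _ => agree_succ i)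
    (agree_large (i + b + 1) (by omega)) (by omega : i ≤ i + b + 1)

lemma exists_eq_add_shift (c : ℕ →₀ ℕ) : ∃ f, f = c + shift f := by
  induction c using Finsupp.induction_linear with
  | zero => exact ⟨0, by simp only [map_zero, add_zero]⟩
  | add c d hc hd =>
    obtain ⟨f, hf⟩ := hc
    obtain ⟨g, hg⟩ := hd
    refine ⟨f + g, ?_⟩
    rw [map_add, add_add_add_comm, ← hf, ← hg]
  | single i x =>
    refine ⟨Finsupp.indicator (range (i + 1)) fun _ _ => x, ?_⟩
    ext j
    simp only [Finsupp.add_apply, shift_apply, Finsupp.indicator_apply, Finsupp.single_apply,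
      mem_range]
    split_ifs <;> omega

lemma degree_shift_of_eq_add_shift {c f : ℕ →₀ ℕ} (hf : f = c + shift f) :
    degree (shift f) = weight id c := by
  have hweight := weight_succ_shift f
  rw [weight_succ] at hweight
  conv_rhs at hweight => rw [hf, map_add, add_comm]
  exact Nat.add_left_cancel hweight

/-- The gaps `min (α i) (β i) - max (α (i + 1)) (β (i + 1))` of a pair of sequences; in the
steadily decreasing case no subtraction truncates. -/
noncomputable def gap (α β : ℕ →₀ ℕ) : ℕ →₀ ℕ :=
  α ⊓ β - shift (α ⊔ β)

lemma gap_apply (α β : ℕ →₀ ℕ) (i : ℕ) :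
    gap α β i = min (α i) (β i) - max (α (i + 1)) (β (i + 1)) := rfl

lemma gap_comm (α β : ℕ →₀ ℕ) : gap α β = gap β α := by
  rw [gap, gap, inf_comm, sup_comm]

lemma steadilyDecreasing_comm {a b : ℕ → ℕ} :
    SteadilyDecreasing a b ↔ SteadilyDecreasing b a := by
  simp only [SteadilyDecreasing, max_comm, min_comm]

lemma sup_eq_add_shift {α β : ℕ →₀ ℕ} (h : SteadilyDecreasing α β) :
    α ⊔ β = gap α β + (α - β) + (β - α) + shift (α ⊔ β) := by
  ext i
  have hi := h i
  simp only [Finsupp.add_apply, Finsupp.tsub_apply, Finsupp.sup_apply, shift_apply, gap_apply]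
  omega

lemma eq_add_shift_sup {α β : ℕ →₀ ℕ} (h : SteadilyDecreasing α β) :
    α = gap α β + (α - β) + shift (α ⊔ β) := by
  ext i
  have hi := h i
  simp only [Finsupp.add_apply, Finsupp.tsub_apply, Finsupp.sup_apply, shift_apply, gap_apply]
  omega

/-- Carlitz's encoding `((u, v), w)` of a pair `(α, β)` of sequences: `w` collects the gaps of odd
index, and each gap of even index `2 * j` is added to the `j`-th term of both truncated differences
`α - β` and `β - α`. -/
noncomputable def carlitzCode (p : (ℕ →₀ ℕ) × (ℕ →₀ ℕ)) :
    ((ℕ →₀ ℕ) × (ℕ →₀ ℕ)) × (ℕ →₀ ℕ) :=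
  ((p.1 - p.2 + evenPart (gap p.1 p.2), p.2 - p.1 + evenPart (gap p.1 p.2)),
    oddPart (gap p.1 p.2))

lemma carlitzCode_swap (p : (ℕ →₀ ℕ) × (ℕ →₀ ℕ)) :
    carlitzCode p.swap = Prod.map Prod.swap id (carlitzCode p) := by
  rw [carlitzCode, carlitzCode, gap_comm]
  rfl

lemma degree_eq_weight_carlitzCode {α β : ℕ →₀ ℕ} (h : SteadilyDecreasing α β) :
    degree α = weight Nat.succ (carlitzCode (α, β)).1.1 + weight id (carlitzCode (α, β)).1.2 +
      weight (2 * · + 2) (carlitzCode (α, β)).2 := by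
  have hshift : degree (shift (α ⊔ β)) = weight id (gap α β + (α - β) + (β - α)) :=
    degree_shift_of_eq_add_shift (sup_eq_add_shift h)
  have hgap : weight Nat.succ (gap α β) = weight Nat.succ (evenPart (gap α β)) +
      weight id (evenPart (gap α β)) + weight (2 * · + 2) (oddPart (gap α β)) := by
    rw [weight_eq_evenPart_add_oddPart]
    congr 1
    simp only [Finsupp.weight_apply, ← Finsupp.sum_add]
    refine Finsupp.sum_congr fun i _ => ?_
    simp only [Function.comp_apply, smul_eq_mul, id, Nat.succ_eq_add_one]
    ring
  conv_lhs => rw [eq_add_shift_sup h]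
  simp only [carlitzCode, map_add, hshift, weight_succ] at hgap ⊢
  omega

lemma injOn_carlitzCode : Set.InjOn carlitzCode {p | SteadilyDecreasing p.1 p.2} := by
  rintro ⟨α, β⟩ (h : SteadilyDecreasing α β) ⟨α', β'⟩ (h' : SteadilyDecreasing α' β') hcode
  simp only [carlitzCode, Prod.mk.injEq] at hcode
  obtain ⟨⟨hu, hv⟩, hw⟩ := hcode
  have hpointwise (i : ℕ) : evenPart (gap α β) i = evenPart (gap α' β') i ∧
      (α - β) i = (α' - β') i ∧ (β - α) i = (β' - α') i := by
    have hui := DFunLike.congr_fun hu i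
    have hvi := DFunLike.congr_fun hv i
    simp only [Finsupp.add_apply, Finsupp.tsub_apply] at hui hvi ⊢
    omega
  have hgap : gap α β = gap α' β' :=
    eq_of_evenPart_eq_of_oddPart_eq (Finsupp.ext fun i => (hpointwise i).1) hw
  have hαβ : α - β = α' - β' := Finsupp.ext fun i => (hpointwise i).2.1
  have hβα : β - α = β' - α' := Finsupp.ext fun i => (hpointwise i).2.2
  have hsup : α ⊔ β = α' ⊔ β' := by
    refine eq_of_eq_add_shift (sup_eq_add_shift h) ?_
    rw [hgap, hαβ, hβα]
    exact sup_eq_add_shift h'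
  ext1
  · rw [eq_add_shift_sup h, eq_add_shift_sup h', hgap, hαβ, hsup]
  · rw [eq_add_shift_sup (steadilyDecreasing_comm.mp h),
      eq_add_shift_sup (steadilyDecreasing_comm.mp h'), gap_comm β, gap_comm β', sup_comm β,
      sup_comm β', hgap, hβα, hsup]

lemma exists_gap_eq {p q : ℕ →₀ ℕ} (hpq : Disjoint p q) (e : ℕ →₀ ℕ) :
    ∃ α β : ℕ →₀ ℕ, SteadilyDecreasing α β ∧ α - β = p ∧ β - α = q ∧ gap α β = e := by
  obtain ⟨f, hf⟩ := exists_eq_add_shift (e + p + q)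
  have hpq_apply (i : ℕ) : p i = 0 ∨ q i = 0 := by
    have hi := DFunLike.congr_fun (disjoint_iff.mp hpq) i
    simp only [Finsupp.inf_apply, bot_eq_zero, Finsupp.zero_apply] at hi
    omega
  have hf_apply (i : ℕ) : f i = e i + p i + q i + f (i + 1) := DFunLike.congr_fun hf i
  refine ⟨e + p + shift f, e + q + shift f, fun i => ?_, Finsupp.ext fun i => ?_,
    Finsupp.ext fun i => ?_, Finsupp.ext fun i => ?_⟩
  all_goals
    have hi := hpq_apply i
    have hi' := hpq_apply (i + 1)
    have hfi := hf_apply (i + 1)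
    simp only [gap_apply, Finsupp.add_apply, Finsupp.tsub_apply, shift_apply]
    omega

lemma exists_carlitzCode_eq (x : ((ℕ →₀ ℕ) × (ℕ →₀ ℕ)) × (ℕ →₀ ℕ)) :
    ∃ p : (ℕ →₀ ℕ) × (ℕ →₀ ℕ), SteadilyDecreasing p.1 p.2 ∧ carlitzCode p = x := by
  obtain ⟨⟨u, v⟩, w⟩ := x
  have hdisjoint : Disjoint (u - v) (v - u) := by
    refine disjoint_iff.mpr (Finsupp.ext fun i => ?_)
    simp only [Finsupp.inf_apply, Finsupp.tsub_apply, bot_eq_zero, Finsupp.zero_apply]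
    omega
  obtain ⟨α, β, hsteady, hαβ, hβα, hgap⟩ := exists_gap_eq hdisjoint (interleave (u ⊓ v) w)
  refine ⟨(α, β), hsteady, ?_⟩
  simp only [carlitzCode, hαβ, hβα, hgap, evenPart_interleave, oddPart_interleave]
  congr 2 <;> ext i <;> simp only [Finsupp.add_apply, Finsupp.tsub_apply, Finsupp.inf_apply] <;>
    omega

/-- The multiset with `f i` copies of `g i` for each `i`. -/
noncomputable def partsMultiset (g : ℕ → ℕ) (f : ℕ →₀ ℕ) : Multiset ℕ :=
  (Finsupp.toMultiset f).map g

lemma card_partsMultiset (g : ℕ → ℕ) (f : ℕ →₀ ℕ) : (partsMultiset g f).card = degree f := by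
  rw [partsMultiset, Multiset.card_map, Finsupp.card_toMultiset]
  rfl

lemma sum_partsMultiset (g : ℕ → ℕ) (f : ℕ →₀ ℕ) : (partsMultiset g f).sum = weight g f := by
  rw [partsMultiset, Finsupp.toMultiset_map, Finsupp.sum_toMultiset, ← Function.id_comp g,
    ← weight_mapDomain, Function.id_comp, Finsupp.weight_apply]
  rfl

lemma partsMultiset_injective {g : ℕ → ℕ} (hg : Function.Injective g) :
    Function.Injective (partsMultiset g) :=
  (Multiset.map_injective hg).comp Multiset.toFinsupp.symm.injective

lemma exists_partsMultiset_eq_iff {g : ℕ → ℕ} {s : Multiset ℕ} :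
    (∃ f, partsMultiset g f = s) ↔ ∀ i ∈ s, i ∈ Set.range g := by
  constructor
  · rintro ⟨f, rfl⟩ i hi
    obtain ⟨j, -, hj⟩ := Multiset.mem_map.mp hi
    exact ⟨j, hj⟩
  · intro hs
    refine ⟨Multiset.toFinsupp (s.map (Function.invFun g)), ?_⟩
    rw [partsMultiset, Multiset.toFinsupp_toMultiset, Multiset.map_map]
    exact (Multiset.map_congr rfl fun i hi => Function.invFun_eq (hs i hi)).trans s.map_id

/-- Encodes `((u, v), w)` as a triple of multisets: `u` counts parts `j`, which may be zero, `v`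
counts parts `j + 1`, and `w` counts parts `2 * j + 2`. -/
noncomputable def partsTriple (x : ((ℕ →₀ ℕ) × (ℕ →₀ ℕ)) × (ℕ →₀ ℕ)) :
    (Multiset ℕ × Multiset ℕ) × Multiset ℕ :=
  ((partsMultiset id x.1.1, partsMultiset Nat.succ x.1.2), partsMultiset (2 * · + 2) x.2)

lemma partsTriple_injective : Function.Injective partsTriple := by
  have hw : Function.Injective (2 * · + 2 : ℕ → ℕ) :=
    (add_left_injective 2).comp (mul_right_injective₀ two_ne_zero)
  exact ((partsMultiset_injective Function.injective_id).prodMap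
    (partsMultiset_injective Nat.succ_injective)).prodMap (partsMultiset_injective hw)

lemma range_partsTriple :
    Set.range partsTriple = {x | (∀ i ∈ x.1.2, 0 < i) ∧ ∀ i ∈ x.2, 0 < i ∧ Even i} := by
  have hpos (i : ℕ) : i ∈ Set.range Nat.succ ↔ 0 < i := by
    rw [Nat.range_succ, Set.mem_ofPred_eq]
  have heven (i : ℕ) : i ∈ Set.range (2 * · + 2) ↔ 0 < i ∧ Even i := by
    rw [Set.mem_range, even_iff_exists_two_mul]
    constructor
    · rintro ⟨j, rfl⟩
      exact ⟨by omega, j + 1, by omega⟩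
    · rintro ⟨hi, j, rfl⟩
      exact ⟨j - 1, by omega⟩
  change Set.range (Prod.map (Prod.map (partsMultiset id) (partsMultiset Nat.succ))
    (partsMultiset (2 * · + 2))) = _
  ext x
  simp only [Set.range_prodMap, Set.mem_prod, Set.mem_range, exists_partsMultiset_eq_iff]
  simp only [← Set.mem_range, hpos, heven]
  simp

/-- The triples `((u, v), w)` of total size `n` in which `u` has `m - n` more parts than `v`, where
`v` is a partition, `w` is a partition into even parts, and `u` is a partition padded with zeros. -/
def zeroPaddedTriples (m n : ℕ) : Set ((Multiset ℕ × Multiset ℕ) × Multiset ℕ) :=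
  {x | (∀ i ∈ x.1.2, 0 < i) ∧ (∀ i ∈ x.2, 0 < i ∧ Even i) ∧
    x.1.1.sum + x.1.2.sum + x.2.sum = n ∧ x.1.1.card + n = m + x.1.2.card}

lemma partsTriple_carlitzCode_mem_iff {p : (ℕ →₀ ℕ) × (ℕ →₀ ℕ)}
    (h : SteadilyDecreasing p.1 p.2) (m n : ℕ) :
    partsTriple (carlitzCode p) ∈ zeroPaddedTriples m n ↔ degree p.1 = m ∧ degree p.2 = n := by
  have hrange : partsTriple (carlitzCode p) ∈ Set.range partsTriple := ⟨_, rfl⟩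
  rw [range_partsTriple] at hrange
  have hdegree := degree_eq_weight_carlitzCode h
  have hdegree' := degree_eq_weight_carlitzCode (steadilyDecreasing_comm.mp h)
  rw [Prod.mk.eta] at hdegree
  rw [← Prod.swap, carlitzCode_swap] at hdegree'
  rw [zeroPaddedTriples, Set.mem_ofPred_eq, and_iff_right hrange.1, and_iff_right hrange.2]
  simp only [partsTriple, sum_partsMultiset, card_partsMultiset, weight_succ, Prod.map, id,
    Prod.fst_swap, Prod.snd_swap] at hdegree hdegree' ⊢
  omega

lemma bijOn_partsTriple_carlitzCode (m n : ℕ) :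
    Set.BijOn (partsTriple ∘ carlitzCode)
      {p | SteadilyDecreasing p.1 p.2 ∧ degree p.1 = m ∧ degree p.2 = n}
      (zeroPaddedTriples m n) := by
  refine ⟨fun p hp => (partsTriple_carlitzCode_mem_iff hp.1 m n).mpr hp.2, ?_, fun x hx => ?_⟩
  · exact partsTriple_injective.comp_injOn (injOn_carlitzCode.mono fun p hp => hp.1)
  · have hrange : x ∈ Set.range partsTriple := range_partsTriple ▸ ⟨hx.1, hx.2.1⟩
    obtain ⟨y, rfl⟩ := hrange
    obtain ⟨p, hp, rfl⟩ := exists_carlitzCode_eq y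
    exact ⟨p, ⟨hp, (partsTriple_carlitzCode_mem_iff hp m n).mp hx⟩, rfl⟩

lemma SteadilyDecreasing.antitone_left {a b : ℕ → ℕ} (h : SteadilyDecreasing a b) : Antitone a :=
  antitone_nat_of_succ_le fun i => (le_max_left _ _).trans ((h i).trans (min_le_left _ _))

lemma bipartitePi_eq_ncard (m n : ℕ) : bipartitePi m n = (zeroPaddedTriples m n).ncard := by
  rw [← (bijOn_partsTriple_carlitzCode m n).ncard_eq, ← Nat.card_coe_set_eq]
  refine Nat.card_congr (Equiv.subtypeEquivRight fun p => ?_)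
  constructor
  · rintro ⟨-, -, h⟩
    exact h
  · intro h
    exact ⟨fun i => h.1.antitone_left i.le_succ,
      fun i => (steadilyDecreasing_comm.mp h.1).antitone_left i.le_succ, h⟩

end CarlitzBijection

section Difference

lemma card_le_sum_of_pos {s : Multiset ℕ} (hs : ∀ i ∈ s, 0 < i) : s.card ≤ s.sum := by
  simpa only [smul_eq_mul, mul_one] using Multiset.card_nsmul_le_sum (a := 1) hs

lemma zeroPaddedTriples_zero (n : ℕ) : zeroPaddedTriples 0 n = crankTriples (0 - n) n := by
  ext x
  simp only [SetLike.mem_coe, mem_crankTriples]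
  constructor
  · rintro ⟨hv, hw, hn, hs⟩
    have hcard := card_le_sum_of_pos hv
    have hu : x.1.1 = 0 := Multiset.card_eq_zero.mp (by omega)
    exact ⟨by simp [hu], hv, hw, hn, by omega⟩
  · rintro ⟨-, hv, hw, hn, hs⟩
    exact ⟨hv, hw, hn, by omega⟩

/-- Adds a zero to the first entry of a triple. -/
def consZero (x : (Multiset ℕ × Multiset ℕ) × Multiset ℕ) :
    (Multiset ℕ × Multiset ℕ) × Multiset ℕ :=
  ((0 ::ₘ x.1.1, x.1.2), x.2)

lemma consZero_injective : Function.Injective consZero := by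
  rintro x y h
  simp only [consZero, Prod.mk.injEq, Multiset.cons_inj_right] at h
  exact Prod.ext (Prod.ext h.1.1 h.1.2) h.2

lemma zeroPaddedTriples_succ (m n : ℕ) :
    zeroPaddedTriples (m + 1) n =
      (crankTriples ((m + 1 : ℕ) - n) n : Set _) ∪ consZero '' zeroPaddedTriples m n := by
  ext x
  simp only [Set.mem_union, SetLike.mem_coe, mem_crankTriples]
  constructor
  · rintro ⟨hv, hw, hn, hs⟩
    by_cases hzero : 0 ∈ x.1.1
    · have hsum := Multiset.sum_erase hzero
      have hcard := Multiset.card_erase_add_one hzero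
      refine .inr ⟨((x.1.1.erase 0, x.1.2), x.2), ⟨hv, hw, ?_, ?_⟩, ?_⟩
      · dsimp only
        omega
      · dsimp only
        omega
      · simp only [consZero, Multiset.cons_erase hzero]
    · exact .inl ⟨fun i hi => Nat.pos_of_ne_zero (ne_of_mem_of_not_mem hi hzero), hv, hw, hn,
        by omega⟩
  · rintro (⟨-, hv, hw, hn, hs⟩ | ⟨y, ⟨hv, hw, hn, hs⟩, rfl⟩)
    · exact ⟨hv, hw, hn, by omega⟩
    · refine ⟨hv, hw, ?_, ?_⟩
      · simpa only [consZero, Multiset.sum_cons, zero_add] using hn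
      · simp only [consZero, Multiset.card_cons]
        omega

lemma disjoint_crankTriples_image_consZero (s : ℤ) (n : ℕ)
    (A : Set ((Multiset ℕ × Multiset ℕ) × Multiset ℕ)) :
    Disjoint (crankTriples s n : Set ((Multiset ℕ × Multiset ℕ) × Multiset ℕ))
      (consZero '' A) := by
  rw [Set.disjoint_left]
  rintro _ hx ⟨y, -, rfl⟩
  exact lt_irrefl 0 ((mem_crankTriples.mp hx).1 0 (Multiset.mem_cons_self 0 _))

lemma finite_zeroPaddedTriples (m n : ℕ) : (zeroPaddedTriples m n).Finite := by
  induction m with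
  | zero => exact zeroPaddedTriples_zero n ▸ finite_toSet _
  | succ m ih => exact zeroPaddedTriples_succ m n ▸ (finite_toSet _).union (ih.image _)

lemma Dbip_eq_card_crankTriples (m n : ℕ) : Dbip m n = #(crankTriples (m - n) n) := by
  rw [Dbip, bipartitePi_eq_ncard]
  cases m with
  | zero =>
    rw [if_pos rfl, sub_zero, zeroPaddedTriples_zero, Set.ncard_coe_finset, Nat.cast_zero]
  | succ m =>
    rw [if_neg m.succ_ne_zero, Nat.add_sub_cancel, bipartitePi_eq_ncard, zeroPaddedTriples_succ,
      Set.ncard_union_eq (disjoint_crankTriples_image_consZero _ _ _) (finite_toSet _)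
        ((finite_zeroPaddedTriples m n).image _), Set.ncard_coe_finset,
      Set.ncard_image_of_injective _ consZero_injective, Nat.cast_add, add_sub_cancel_right]

lemma abs_crank_le {n : ℕ} (l : n.Partition) : |crank l| ≤ n := by
  have hsup : l.parts.sup ≤ n :=
    Multiset.sup_le.mpr fun _ hi => l.le_of_mem_parts hi
  have hones : l.parts.count 1 ≤ l.parts.card := Multiset.count_le_card 1 l.parts
  have hlarge := Multiset.card_le_card (Multiset.filter_le (l.parts.count 1 < ·) l.parts)
  have hcard : l.parts.card ≤ n :=
    (card_le_sum_of_pos fun _ => l.parts_pos).trans_eq l.parts_sum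
  rw [crank, abs_le]
  split_ifs <;> omega

lemma crankM_eq_zero_of_lt_abs {s : ℤ} {n : ℕ} (h : n < |s|) : crankM s n = 0 := by
  by_cases hn : n = 1
  · rw [crankM, if_pos hn]
    rw [abs_eq_max_neg] at h
    split_ifs <;> omega
  · have : IsEmpty {l : n.Partition // crank l = s} :=
      ⟨fun ⟨l, hl⟩ => (abs_crank_le l).not_gt (hl ▸ h)⟩
    rw [crankM, if_neg hn, Nat.card_of_isEmpty, Nat.cast_zero]

theorem Dbip_eq_sum_antidiagonal (m n : ℕ) :
    Dbip m n = ∑ p ∈ antidiagonal n, (cubicPartition p.2 : ℤ) * crankM |(m : ℤ) - n| p.1 := by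
  rw [Dbip_eq_card_crankTriples, ← card_crankTriples_abs, card_crankTriples]

lemma sum_antidiagonal_eq_sum_range_of_eq_zero {R : Type*} [NonUnitalNonAssocSemiring R]
    {n L : ℕ} (hL : L ≤ n) (c M : ℕ → R) (hM : ∀ j < n - L, M j = 0) :
    ∑ p ∈ antidiagonal n, c p.2 * M p.1 = ∑ k ∈ range (L + 1), c (L - k) * M (n - L + k) := by
  have hsplit : n.succ = (n - L) + (L + 1) := by omega
  rw [Finset.Nat.sum_antidiagonal_eq_sum_range_succ fun i j => c j * M i, hsplit, sum_range_add,
    sum_eq_zero fun j hj => by rw [hM j (mem_range.mp hj), mul_zero], zero_add]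
  refine sum_congr rfl fun k _ => ?_
  rw [show n - (n - L + k) = L - k by omega]

end Difference

/-- for `m ≤ 2n`, with `L = min(2n - m, m)`,
`D(m,n) = Σ_{0 ≤ k ≤ L} c(L - k) · M(n - L, n - L + k)`. -/
theorem Dbip_eq_sum_cubic_crankM_min (m n : ℕ) (h : m ≤ 2 * n) :
    Dbip m n = ∑ k ∈ Finset.range (min (2 * n - m) m + 1),
      (cubicPartition (min (2 * n - m) m - k) : ℤ) *
        crankM ((n : ℤ) - (min (2 * n - m) m : ℤ)) (n - min (2 * n - m) m + k) := by
  have habs : (n : ℤ) - min (2 * (n : ℤ) - m) m = |(m : ℤ) - n| := by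
    rw [abs_eq_max_neg]
    omega
  rw [habs, Dbip_eq_sum_antidiagonal]
  refine sum_antidiagonal_eq_sum_range_of_eq_zero (c := fun j => (cubicPartition j : ℤ))
    (M := crankM |(m : ℤ) - n|) (by omega) fun j hj => crankM_eq_zero_of_lt_abs ?_
  rw [abs_abs, ← habs]
  omega
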